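/- arXiv:2206.01816 — 2 statements merged into one kernel-verified Lean document; each statement's English description precedes it below -/
import Mathlib

section
/- Let X be a nonempty finite set, let p : X → ℝ and ξ : X → ℝ be probability distributions on X with p(x) > 0 and ξ(x) > 0 for all x ∈ X, and let Z̄ > 0 and m > 0 be real numbers. For q : X → ℝ with q(x) > 0 for all x, define the generalized NCE loss L_{Z̄}(q) = −∑_{x∈X} p(x)·log( q(x)/(q(x) + Z̄·m·ξ(x)) ) − m·∑_{x∈X} ξ(x)·log( Z̄·m·ξ(x)/(q(x) + Z̄·m·ξ(x)) ). Then the function q* defined by q*(x) = Z̄·p(x) is the unique global minimizer of L_{Z̄} over all strictly positive q : X → ℝ; that is, L_{Z̄}(Z̄·p) ≤ L_{Z̄}(q) for all positive q, with equality if and only if q = Z̄·p. -/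
/-!
Noise-contrastive estimation is a classification problem on `X ⊕ X`, where `inl x` is a data sample
and `inr x` a noise sample, carrying the weights `p x` and `m * ξ x`. The loss is the cross entropy
of these weights against the label probabilities predicted by the model `q`. At `q = Z * p` the
constant `Z` cancels and the predictions are the true label probabilities, so Gibbs' inequality,
that is `log t ≤ t - 1` at the ratio `t` of the two predictions, applies. Equality forces `t = 1`,
and the predictions determine `q`.
-/

section WeightedLog

variable {ι : Type*} [Fintype ι] {w u v : ι → ℝ}

theorem sum_mul_log_lt_sum_mul_log (hw : ∀ i, 0 < w i) (hu : ∀ i, 0 < u i) (hv : ∀ i, 0 < v i)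
    (hratio : ∑ i, w i * (u i / v i) ≤ ∑ i, w i) (hne : u ≠ v) :
    ∑ i, w i * Real.log (u i) < ∑ i, w i * Real.log (v i) := by
  obtain ⟨j, hj⟩ := Function.ne_iff.mp hne
  have log_ratio_le (i : ι) : Real.log (u i / v i) ≤ u i / v i - 1 :=
    Real.log_le_sub_one_of_pos (div_pos (hu i) (hv i))
  have log_ratio_lt : Real.log (u j / v j) < u j / v j - 1 :=
    Real.log_lt_sub_one_of_pos (div_pos (hu j) (hv j)) (mt (div_eq_one_iff_eq (hv j).ne').mp hj)
  rw [← sub_neg]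
  calc
    ∑ i, w i * Real.log (u i) - ∑ i, w i * Real.log (v i)
        = ∑ i, w i * Real.log (u i / v i) := by
      simp only [Real.log_div (hu _).ne' (hv _).ne', mul_sub, Finset.sum_sub_distrib]
    _ < ∑ i, w i * (u i / v i - 1) :=
      Finset.sum_lt_sum (fun i _ => mul_le_mul_of_nonneg_left (log_ratio_le i) (hw i).le)
        ⟨j, Finset.mem_univ j, mul_lt_mul_of_pos_left log_ratio_lt (hw j)⟩
    _ = ∑ i, w i * (u i / v i) - ∑ i, w i := by
      simp only [mul_sub, mul_one, Finset.sum_sub_distrib]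
    _ ≤ 0 := sub_nonpos.mpr hratio

end WeightedLog

/-- The label probabilities predicted by an unnormalized model `q` against the noise weights `ν`:
at `inl x` the probability that a sample with value `x` is data, at `inr x` that it is noise. -/
noncomputable def labelPosterior {X : Type*} (ν q : X → ℝ) : X ⊕ X → ℝ :=
  Sum.elim (fun x => q x / (q x + ν x)) (fun x => ν x / (q x + ν x))

namespace labelPosterior

variable {X : Type*} {ν q : X → ℝ}

theorem pos (hν : ∀ x, 0 < ν x) (hq : ∀ x, 0 < q x) (i : X ⊕ X) : 0 < labelPosterior ν q i := by
  rcases i with x | x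
  · exact div_pos (hq x) (add_pos (hq x) (hν x))
  · exact div_pos (hν x) (add_pos (hq x) (hν x))

theorem injective (hν : ∀ x, ν x ≠ 0) : Function.Injective (labelPosterior ν) := by
  intro q r h
  funext x
  have noise_prob_eq : ν x / (q x + ν x) = ν x / (r x + ν x) := congrFun h (Sum.inr x)
  simp only [div_eq_mul_inv] at noise_prob_eq
  exact add_right_cancel (inv_injective (mul_left_cancel₀ (hν x) noise_prob_eq))

theorem const_mul {c : ℝ} (hc : c ≠ 0) (ν q : X → ℝ) :
    labelPosterior (fun x => c * ν x) (fun x => c * q x) = labelPosterior ν q := by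
  funext i
  rcases i with x | x <;>
    simp only [labelPosterior, Sum.elim_inl, Sum.elim_inr, ← mul_add, mul_div_mul_left _ _ hc]

theorem sum_mul_div_eq [Fintype X] {a b : X → ℝ} (ha : ∀ x, 0 < a x) (hb : ∀ x, 0 < b x)
    (hqν : ∀ x, q x + ν x ≠ 0) :
    ∑ i, Sum.elim a b i * (labelPosterior ν q i / labelPosterior b a i) =
      ∑ i, Sum.elim a b i := by
  simp only [Fintype.sum_sum_type, ← Finset.sum_add_distrib, labelPosterior, Sum.elim_inl,
    Sum.elim_inr]
  refine Finset.sum_congr rfl fun x _ => ?_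
  have := ha x
  have := hb x
  have := hqν x
  field_simp

end labelPosterior

/-- The generalized noise-contrastive estimation loss of an unnormalized model `q`, for data weights
`p`, noise weights `ξ`, fixed normalization constant `Z` and noise-to-data ratio `m`. -/
noncomputable def nceLoss {X : Type*} [Fintype X] (p ξ : X → ℝ) (Z m : ℝ) (q : X → ℝ) : ℝ :=
  -∑ x, p x * Real.log (q x / (q x + Z * m * ξ x))
    - m * ∑ x, ξ x * Real.log (Z * m * ξ x / (q x + Z * m * ξ x))

theorem nceLoss_eq_neg_sum_mul_log_labelPosterior {X : Type*} [Fintype X] (p ξ : X → ℝ) (Z m : ℝ)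
    (q : X → ℝ) :
    nceLoss p ξ Z m q = -∑ i, Sum.elim p (fun x => m * ξ x) i *
      Real.log (labelPosterior (fun x => Z * (m * ξ x)) q i) := by
  simp only [nceLoss, labelPosterior, Fintype.sum_sum_type, Sum.elim_inl, Sum.elim_inr,
    Finset.mul_sum, mul_assoc, neg_add, sub_eq_add_neg]

theorem nceLoss_const_mul_lt {X : Type*} [Fintype X] {p ξ q : X → ℝ} {Z m : ℝ}
    (hp : ∀ x, 0 < p x) (hξ : ∀ x, 0 < ξ x) (hZ : 0 < Z) (hm : 0 < m) (hq : ∀ x, 0 < q x)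
    (hne : q ≠ fun x => Z * p x) :
    nceLoss p ξ Z m (fun x => Z * p x) < nceLoss p ξ Z m q := by
  have hnoise (x : X) : 0 < m * ξ x := mul_pos hm (hξ x)
  have hν (x : X) : 0 < Z * (m * ξ x) := mul_pos hZ (hnoise x)
  have hweight : ∀ i, 0 < Sum.elim p (fun x => m * ξ x) i := Sum.rec hp hnoise
  have hposterior :
      labelPosterior (fun x => Z * (m * ξ x)) q ≠ labelPosterior (fun x => m * ξ x) p := by
    rw [← labelPosterior.const_mul hZ.ne' (fun x => m * ξ x) p]
    exact (labelPosterior.injective fun x => (hν x).ne').ne hne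
  simp only [nceLoss_eq_neg_sum_mul_log_labelPosterior, labelPosterior.const_mul hZ.ne',
    neg_lt_neg_iff]
  exact sum_mul_log_lt_sum_mul_log hweight (labelPosterior.pos hν hq) (labelPosterior.pos hnoise hp)
    (labelPosterior.sum_mul_div_eq hp hnoise fun x => (add_pos (hq x) (hν x)).ne').le hposterior

theorem stmt_1_general {X : Type*} [Fintype X] {p ξ q : X → ℝ} {Z m : ℝ}
    (hp : ∀ x, 0 < p x) (hξ : ∀ x, 0 < ξ x) (hZ : 0 < Z) (hm : 0 < m) (hq : ∀ x, 0 < q x) :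
    nceLoss p ξ Z m (fun x => Z * p x) ≤ nceLoss p ξ Z m q ∧
      (nceLoss p ξ Z m (fun x => Z * p x) = nceLoss p ξ Z m q ↔ q = fun x => Z * p x) := by
  by_cases h : q = fun x => Z * p x
  · simp only [h, le_refl, and_self]
  · have hlt := nceLoss_const_mul_lt hp hξ hZ hm hq h
    exact ⟨hlt.le, iff_of_false hlt.ne h⟩

/-- Generalized NCE (Corollary 1): with fixed normalization constant `Z̄ > 0`, the
generalized NCE loss over a finite space is uniquely minimized at `q = Z̄ • p`. -/
theorem stmt_1 {X : Type*} [Fintype X] [Nonempty X]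
    (p ξ : X → ℝ) (hp : ∀ x, 0 < p x) (hξ : ∀ x, 0 < ξ x)
    (hp1 : ∑ x, p x = 1) (hξ1 : ∑ x, ξ x = 1)
    (Z m : ℝ) (hZ : 0 < Z) (hm : 0 < m)
    (L : (X → ℝ) → ℝ)
    (hL : ∀ q, L q =
      -∑ x, p x * Real.log (q x / (q x + Z * m * ξ x))
      - m * ∑ x, ξ x * Real.log (Z * m * ξ x / (q x + Z * m * ξ x))) :
    ∀ q : X → ℝ, (∀ x, 0 < q x) →
      L (fun x => Z * p x) ≤ L q ∧
      (L (fun x => Z * p x) = L q ↔ q = fun x => Z * p x) := by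
  obtain rfl : L = nceLoss p ξ Z m := funext hL
  exact fun q hq => stmt_1_general hp hξ hZ hm hq
end

section
/- Let X be a nonempty finite set with |X| = N, let p : X → ℝ be a probability distribution on X with p(x) > 0 for all x, and let m > 0 be a real number. Define the NEG loss for q : X → ℝ with q(x) > 0 by L^{NEG}(q) = −∑_{x∈X} p(x)·log( q(x)/(q(x) + 1) ) − (m/N)·∑_{x∈X} log( 1 − q(x)/(q(x) + 1) ). Then the function q* defined by q*(x) = (N/m)·p(x) is the unique global minimizer of L^{NEG} over all strictly positive q : X → ℝ. -/
/-!
Writing `y = q / (q + 1)`, each point `x` contributes to the NEG loss the cross-entropy of a binary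
classifier deciding between a data sample of weight `p x` and a noise sample of weight `w x`. By
Gibbs' inequality this is smallest exactly at `y = p x / (p x + w x)`, which is the odds
`q x = p x / w x`. No constraint couples different points, so the total loss is minimized pointwise.
-/

open Finset Real

theorem mul_log_lt_mul_log_add_sub {a b : ℝ} (ha : 0 < a) (hb : 0 < b) (hne : b ≠ a) :
    a * log b < a * log a + (b - a) := by
  have tangent : a * log (b / a) < a * (b / a - 1) :=
    mul_lt_mul_of_pos_left
      (log_lt_sub_one_of_pos (div_pos hb ha) fun h ↦ hne ((div_eq_one_iff_eq ha.ne').mp h)) ha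
  rw [log_div hb.ne' ha.ne', mul_sub_one, mul_div_cancel₀ b ha.ne'] at tangent
  linarith

theorem mul_log_le_mul_log_add_sub {a b : ℝ} (ha : 0 < a) (hb : 0 < b) :
    a * log b ≤ a * log a + (b - a) := by
  obtain rfl | hne := eq_or_ne b a
  · rw [sub_self, add_zero]
  · exact (mul_log_lt_mul_log_add_sub ha hb hne).le

/-- The cross-entropy of the weights `a`, `b` of the two classes of a binary classification problem
against the prediction `(y, 1 - y)`. The weights need not sum to one. -/
noncomputable def binaryCrossEntropy (a b y : ℝ) : ℝ :=
  -(a * log y) - b * log (1 - y)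

theorem binaryCrossEntropy_div_add_lt {a b y : ℝ} (ha : 0 < a) (hb : 0 < b) (hy₀ : 0 < y)
    (hy₁ : y < 1) (hne : y ≠ a / (a + b)) :
    binaryCrossEntropy a b (a / (a + b)) < binaryCrossEntropy a b y := by
  have hab : 0 < a + b := add_pos ha hb
  have hy₁' : 0 < 1 - y := sub_pos.mpr hy₁
  have first_class : a * log ((a + b) * y) < a * log a + ((a + b) * y - a) :=
    mul_log_lt_mul_log_add_sub ha (mul_pos hab hy₀) fun h ↦
      hne (eq_div_of_mul_eq hab.ne' (by rwa [mul_comm]))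
  have second_class : b * log ((a + b) * (1 - y)) ≤ b * log b + ((a + b) * (1 - y) - b) :=
    mul_log_le_mul_log_add_sub hb (mul_pos hab hy₁')
  rw [log_mul hab.ne' hy₀.ne'] at first_class
  rw [log_mul hab.ne' hy₁'.ne'] at second_class
  have compl : 1 - a / (a + b) = b / (a + b) := by
    rw [one_sub_div hab.ne', add_sub_cancel_left]
  rw [binaryCrossEntropy, binaryCrossEntropy, compl, log_div ha.ne' hab.ne',
    log_div hb.ne' hab.ne']
  linarith

section Odds

variable {K : Type*} [Field K]

theorem div_add_one_injOn : Set.InjOn (fun t : K ↦ t / (t + 1)) {t | t + 1 ≠ 0} := by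
  intro t ht u hu h
  have cross : t * (u + 1) = u * (t + 1) := (div_eq_div_iff ht hu).mp h
  linear_combination cross

theorem div_div_div_add_one (a : K) {b : K} (hb : b ≠ 0) : a / b / (a / b + 1) = a / (a + b) := by
  rw [div_add_one hb, div_div_div_cancel_right₀ hb]

end Odds

theorem binaryCrossEntropy_odds_lt {a b t : ℝ} (ha : 0 < a) (hb : 0 < b) (ht : 0 < t)
    (hne : t ≠ a / b) :
    binaryCrossEntropy a b (a / b / (a / b + 1)) < binaryCrossEntropy a b (t / (t + 1)) := by
  have ht₁ : 0 < t + 1 := add_pos ht one_pos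
  have hab₁ : 0 < a / b + 1 := add_pos (div_pos ha hb) one_pos
  have hprob : t / (t + 1) ≠ a / b / (a / b + 1) :=
    fun h ↦ hne (div_add_one_injOn ht₁.ne' hab₁.ne' h)
  rw [div_div_div_add_one a hb.ne'] at hprob ⊢
  exact binaryCrossEntropy_div_add_lt ha hb (div_pos ht ht₁)
    ((div_lt_one ht₁).mpr (lt_add_one t)) hprob

theorem sum_apply_lt_sum_apply_of_ne {ι α M : Type*} [Fintype ι] [AddCommMonoid M] [PartialOrder M]
    [IsOrderedCancelAddMonoid M] {F : ι → α → M} {s q : ι → α}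
    (hF : ∀ i, q i ≠ s i → F i (s i) < F i (q i)) (hne : q ≠ s) :
    ∑ i, F i (s i) < ∑ i, F i (q i) := by
  obtain ⟨j, hj⟩ := Function.ne_iff.mp hne
  refine sum_lt_sum (fun i _ ↦ ?_) ⟨j, mem_univ j, hF j hj⟩
  obtain heq | hi := eq_or_ne (q i) (s i)
  · rw [heq]
  · exact (hF i hi).le

section NegLoss

variable {X : Type*} [Fintype X]

/-- The expected negative-sampling loss of a model `q` for data weights `p` and noise weights `w`.
For `m` noise samples per data sample, drawn from a noise distribution `ξ`, one takes
`w x = m * ξ x`. -/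
noncomputable def negLoss (p w q : X → ℝ) : ℝ :=
  -∑ x, p x * log (q x / (q x + 1)) - ∑ x, w x * log (1 - q x / (q x + 1))

theorem negLoss_eq_sum_binaryCrossEntropy (p w q : X → ℝ) :
    negLoss p w q = ∑ x, binaryCrossEntropy (p x) (w x) (q x / (q x + 1)) := by
  simp only [negLoss, binaryCrossEntropy, sum_sub_distrib, sum_neg_distrib]

theorem negLoss_div_lt {p w q : X → ℝ} (hp : ∀ x, 0 < p x) (hw : ∀ x, 0 < w x)
    (hq : ∀ x, 0 < q x) (hne : q ≠ p / w) : negLoss p w (p / w) < negLoss p w q := by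
  simp only [negLoss_eq_sum_binaryCrossEntropy]
  exact sum_apply_lt_sum_apply_of_ne
    (F := fun x t ↦ binaryCrossEntropy (p x) (w x) (t / (t + 1)))
    (fun x ↦ binaryCrossEntropy_odds_lt (hp x) (hw x) (hq x)) hne

theorem stmt_4_general {p w : X → ℝ} (hp : ∀ x, 0 < p x) (hw : ∀ x, 0 < w x) :
    ∀ q : X → ℝ, (∀ x, 0 < q x) →
      negLoss p w (p / w) ≤ negLoss p w q ∧
      (negLoss p w (p / w) = negLoss p w q ↔ q = p / w) := by
  intro q hq
  obtain rfl | hne := eq_or_ne q (p / w)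
  · exact ⟨le_rfl, iff_of_true rfl rfl⟩
  · have hlt := negLoss_div_lt hp hw hq hne
    exact ⟨hlt.le, iff_of_false hlt.ne hne⟩

end NegLoss

/-- NEG learns a scaled data distribution: the NEG loss with uniform noise is
uniquely minimized at `q* = (N/m) • p`. -/
theorem stmt_4 {X : Type*} [Fintype X] [Nonempty X] (N : ℕ) (hN : Fintype.card X = N)
    (p : X → ℝ) (hp : ∀ x, 0 < p x) (hp1 : ∑ x, p x = 1)
    (m : ℝ) (hm : 0 < m)
    (L : (X → ℝ) → ℝ)
    (hL : ∀ q, L q = -∑ x, p x * Real.log (q x / (q x + 1))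
        - (m / (N : ℝ)) * ∑ x, Real.log (1 - q x / (q x + 1))) :
    ∀ q : X → ℝ, (∀ x, 0 < q x) →
      L (fun x => ((N : ℝ) / m) * p x) ≤ L q ∧
      (L (fun x => ((N : ℝ) / m) * p x) = L q ↔ q = fun x => ((N : ℝ) / m) * p x) := by
  subst hN
  have hloss : L = negLoss p fun _ ↦ m / Fintype.card X := by
    funext q
    rw [hL, negLoss, mul_sum]
  have hmin : (fun x ↦ Fintype.card X / m * p x) = p / fun _ ↦ m / Fintype.card X := by
    funext x
    rw [Pi.div_apply, div_div_eq_mul_div, div_mul_eq_mul_div, mul_comm]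
  rw [hloss, hmin]
  exact stmt_4_general hp fun _ ↦ by positivity
end
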